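/- Vanishing of h (Appendix D): Let τ lie in the complex upper half-plane, write σ = τ/2, and let x, y, z ∈ ℂ be such that all theta-function values appearing in denominators below are nonzero. Then S'''(x−y,τ)·[ζ₁(z−x,σ) − ζ₁(z−y,σ) + ζ₂(x−y,σ)] − 2 S''(x−y,τ)·℘₂(x−y,σ) − S'(x−y,τ)·℘₂'(x−y,σ) + 2 S''(x−y,τ)·℘₁(y−z,σ) + S''(x−y,τ)·(S''(y,τ)/S'(y,τ))·[−ζ₁(z,σ) + ζ₁(z−y,σ) + ζ₂(y,σ)] − S''(x−y,τ)·(S''(x,τ)/S'(x,τ))·[−ζ₁(z,σ) + ζ₁(z−x,σ) + ζ₂(x,σ)] + S''(x−y,τ)·[℘₂(x,σ) − ℘₂(y,σ)] − (S'(z,τ)/S'(x,τ))·S''(z−x,τ)·S''(x−y,τ) + (S'(z,τ)/S'(y,τ))·S''(z−y,τ)·S''(x−y,τ) + S''(z−x,τ)·S''(z−y,τ) = 0. (With x = ξ_i, y = ξ_j, z = ξ_k, this identity proves ∂_{λ_k}Γ_{ij} = Γ_{ij}Γ_{jk} + Γ_{ik}Γ_{kj} − Γ_{ik}Γ_{ij}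 under the elliptic Gibbons–Tsarev system.) -/

import Mathlib

open Complex

/-- Jacobi theta function θ₁(u,τ). -/
noncomputable def theta1 (u τ : ℂ) : ℂ :=
  -∑' k : ℤ, Complex.exp ((Real.pi : ℂ) * Complex.I * τ * ((k : ℂ) + 1/2)^2
      + 2 * (Real.pi : ℂ) * Complex.I * (u + 1/2) * ((k : ℂ) + 1/2))

/-- Jacobi theta function θ₂(u,τ). -/
noncomputable def theta2 (u τ : ℂ) : ℂ :=
  ∑' k : ℤ, Complex.exp ((Real.pi : ℂ) * Complex.I * τ * ((k : ℂ) + 1/2)^2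
      + 2 * (Real.pi : ℂ) * Complex.I * u * ((k : ℂ) + 1/2))

/-- Jacobi theta function θ₃(u,τ). -/
noncomputable def theta3 (u τ : ℂ) : ℂ :=
  ∑' k : ℤ, Complex.exp ((Real.pi : ℂ) * Complex.I * τ * (k : ℂ)^2
      + 2 * (Real.pi : ℂ) * Complex.I * u * (k : ℂ))

/-- Jacobi theta function θ₄(u,τ). -/
noncomputable def theta4 (u τ : ℂ) : ℂ :=
  ∑' k : ℤ, Complex.exp ((Real.pi : ℂ) * Complex.I * τ * (k : ℂ)^2
      + 2 * (Real.pi : ℂ) * Complex.I * (u + 1/2) * (k : ℂ))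

/-- ζ_a(u,τ) = θ_a'(u,τ)/θ_a(u,τ). -/
noncomputable def zeta1 (u τ : ℂ) : ℂ := deriv (fun v => theta1 v τ) u / theta1 u τ
noncomputable def zeta2 (u τ : ℂ) : ℂ := deriv (fun v => theta2 v τ) u / theta2 u τ
noncomputable def zeta3 (u τ : ℂ) : ℂ := deriv (fun v => theta3 v τ) u / theta3 u τ
noncomputable def zeta4 (u τ : ℂ) : ℂ := deriv (fun v => theta4 v τ) u / theta4 u τ

/-- ℘_a(u,τ) = −∂_u ζ_a(u,τ). -/
noncomputable def wp1 (u τ : ℂ) : ℂ := -deriv (fun v => zeta1 v τ) u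
noncomputable def wp2 (u τ : ℂ) : ℂ := -deriv (fun v => zeta2 v τ) u
noncomputable def wp1' (u τ : ℂ) : ℂ := deriv (fun v => wp1 v τ) u
noncomputable def wp2' (u τ : ℂ) : ℂ := deriv (fun v => wp2 v τ) u

/-- S'(u,τ) = ζ₁(u,τ) − ζ₄(u,τ). -/
noncomputable def Sp (u τ : ℂ) : ℂ := zeta1 u τ - zeta4 u τ
/-- S''(u,τ) = ∂_u S'(u,τ). -/
noncomputable def Spp (u τ : ℂ) : ℂ := deriv (fun v => Sp v τ) u
/-- S'''(u,τ) = ∂_u S''(u,τ). -/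
noncomputable def Sppp (u τ : ℂ) : ℂ := deriv (fun v => Spp v τ) u

/-- Partial derivative in the j-th coordinate of a ℂ-valued function on ℝ^N. -/
noncomputable def pdC {N : ℕ} (j : Fin N) (f : (Fin N → ℝ) → ℂ) (x : Fin N → ℝ) : ℂ :=
  fderiv ℝ f x (Pi.single j 1)

/-- Partial derivative in the j-th coordinate of an ℝ-valued function on ℝ^d. -/
noncomputable def pd {d : ℕ} (j : Fin d) (f : (Fin d → ℝ) → ℝ) (x : Fin d → ℝ) : ℝ :=
  fderiv ℝ f x (Pi.single j 1)

/-!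
Write `σ = τ / 2`. Multiplying the series of two values of `θ₂(·, σ)` and rearranging the double sum
over `ℤ²` by parity gives duplication formulas. They show that `θ₁(·, σ)` satisfies the
Weierstrass three-term relation, and that `S'(·, τ)` is the elliptic function
`φ(u) = θ₁'(0, σ) θ₁(u + 1/2, σ) / (θ₁(1/2, σ) θ₁(u, σ))`, so the identity is one about a single
sigma-like function with half period `1/2`.

Differentiating the three-term relation gives, for `u + v + w = 0`,
`φ'(u) = -φ(u) (ζ(u) + ζ(v) + ζ(w)) - φ(v) φ(w)`, and `℘ = φ² + const`. These express the remaining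
derivatives and the values of `ζ` and `℘` at `u + 1/2` through `φ` and `ζ(u) + ζ(v) + ζ(w)`. The
identity follows on using the triples `(x - y, z - x, y - z)`, `(x, z - x, -z)` and
`(y, z - y, -z)`.
-/

/-- Sigma-like functions: the odd entire functions satisfying the Weierstrass three-term relation.
They stand for the Weierstrass sigma functions and, up to a Gaussian factor, for `θ₁`. -/
structure IsSigmaLike (f : ℂ → ℂ) : Prop where
  differentiable : Differentiable ℂ f
  odd : Function.Odd f
  three_term (x y z w : ℂ) :
    f (x + y) * f (x - y) * (f (z + w) * f (z - w))
      + f (x + z) * f (x - z) * (f (w + y) * f (w - y))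
      + f (x + w) * f (x - w) * (f (y + z) * f (y - z)) = 0

/-- The `℘`-function of a sigma-like function `f`: minus the derivative of its `ζ`-function, which is
`logDeriv f`. -/
noncomputable def sigmaP (f : ℂ → ℂ) (u : ℂ) : ℂ := -deriv (logDeriv f) u

/-- The elliptic function `f (u + ω) / f u` attached to a half period `ω` of `f`, normalised to have
residue `1` at the origin. It is odd, and its square is `℘` up to a constant. -/
noncomputable def sigmaPhi (f : ℂ → ℂ) (ω u : ℂ) : ℂ := deriv f 0 / f ω * (f (u + ω) / f u)

section Parity

variable {𝕜 𝕜' F : Type*} [NontriviallyNormedField 𝕜] [NontriviallyNormedField 𝕜']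
  [NormedAlgebra 𝕜 𝕜'] [NormedAddCommGroup F] [NormedSpace 𝕜 F]

theorem even_deriv_of_odd {f : 𝕜 → F} (hf : Function.Odd f) : Function.Even (deriv f) :=
  fun u => by
    have h : deriv (fun v => f (-v)) u = deriv (-f) u := congrArg (deriv · u) (funext hf)
    rwa [deriv_comp_neg, deriv.neg, neg_inj] at h

theorem odd_deriv_of_even {f : 𝕜 → F} (hf : Function.Even f) : Function.Odd (deriv f) :=
  fun u => by
    have h : deriv (fun v => f (-v)) u = deriv f u := congrArg (deriv · u) (funext hf)
    rwa [deriv_comp_neg, neg_eq_iff_eq_neg] at h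

theorem odd_logDeriv_of_odd {f : 𝕜 → 𝕜'} (hf : Function.Odd f) : Function.Odd (logDeriv f) :=
  fun u => by
    rw [logDeriv_apply, logDeriv_apply, even_deriv_of_odd hf, hf, div_neg]

end Parity

section Antiperiodic

variable {R S : Type*} [Ring R] [InvolutiveNeg S] {f : R → S} {ω : R}

theorem sub_half_of_antiperiodic (hω : Function.Antiperiodic f (2 * ω)) (u : R) :
    f (u - ω) = -f (u + ω) := by
  rw [← hω.sub_eq, two_mul, add_sub_add_right_eq_sub]

theorem even_comp_add_half (hf : Function.Odd f) (hω : Function.Antiperiodic f (2 * ω)) :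
    Function.Even fun u => f (u + ω) := fun u => by
  change f (-u + ω) = f (u + ω)
  rw [neg_add_eq_sub, ← neg_sub, hf, sub_half_of_antiperiodic hω, neg_neg]

end Antiperiodic

theorem deriv_half_eq_zero {f : ℂ → ℂ} {ω : ℂ} (hf : Function.Odd f)
    (hω : Function.Antiperiodic f (2 * ω)) : deriv f ω = 0 := by
  simpa [deriv_comp_add_const] using (odd_deriv_of_even (even_comp_add_half hf hω)).map_zero

section SigmaPhi

variable {f : ℂ → ℂ} {ω u : ℂ}

theorem odd_sigmaPhi (hf : Function.Odd f) (hω : Function.Antiperiodic f (2 * ω)) :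
    Function.Odd (sigmaPhi f ω) := fun u => by
  have h : f (-u + ω) = f (u + ω) := even_comp_add_half hf hω u
  rw [sigmaPhi, sigmaPhi, hf, h, div_neg, mul_neg]

theorem sigmaPhi_mul_sigmaPhi_add_half (hω : Function.Antiperiodic f (2 * ω)) (hu : f u ≠ 0)
    (huω : f (u + ω) ≠ 0) :
    sigmaPhi f ω u * sigmaPhi f ω (u + ω) = -(deriv f 0 / f ω) ^ 2 := by
  rw [sigmaPhi, sigmaPhi, add_assoc, ← two_mul, hω]
  field_simp

theorem sigmaPhi_ne_zero (hfω : f ω ≠ 0) (hk : deriv f 0 ≠ 0) (hu : f u ≠ 0)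
    (huω : f (u + ω) ≠ 0) : sigmaPhi f ω u ≠ 0 :=
  mul_ne_zero (div_ne_zero hk hfω) (div_ne_zero huω hu)

theorem differentiableAt_sigmaPhi (hf : Differentiable ℂ f) (hu : f u ≠ 0) :
    DifferentiableAt ℂ (sigmaPhi f ω) u :=
  ((differentiableAt_comp_add_const.2 hf.differentiableAt).div hf.differentiableAt hu).const_mul _

theorem logDeriv_sigmaPhi (hf : Differentiable ℂ f) (hfω : f ω ≠ 0) (hk : deriv f 0 ≠ 0)
    (hu : f u ≠ 0) (huω : f (u + ω) ≠ 0) :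
    logDeriv (sigmaPhi f ω) u = logDeriv f (u + ω) - logDeriv f u := by
  have hshift : logDeriv (fun t => f (t + ω)) u = logDeriv f (u + ω) := by
    rw [logDeriv_apply, deriv_comp_add_const, logDeriv_apply]
  have hφ : sigmaPhi f ω = fun t => deriv f 0 / f ω * (f (t + ω) / f t) := rfl
  rw [hφ, logDeriv_const_mul _ _ (div_ne_zero hk hfω),
    logDeriv_div u huω hu (by fun_prop) (by fun_prop), hshift]

end SigmaPhi

section SigmaP

variable {f : ℂ → ℂ} {u : ℂ}

theorem even_sigmaP (hf : Function.Odd f) : Function.Even (sigmaP f) := fun u => by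
  rw [sigmaP, sigmaP, even_deriv_of_odd (odd_logDeriv_of_odd hf)]

theorem hasDerivAt_logDeriv (hf : Differentiable ℂ f) (hu : f u ≠ 0) :
    HasDerivAt (logDeriv f) (-sigmaP f u) u := by
  rw [sigmaP, neg_neg]
  exact (hf.deriv.differentiableAt.div hf.differentiableAt hu).hasDerivAt

end SigmaP

namespace IsSigmaLike

variable {f : ℂ → ℂ} {ω a b c d u v w : ℂ}

theorem mul_four_sub_mul_four (hf : IsSigmaLike f) (h : a + b + c + d = 0) (t : ℂ) :
    f (t + a) * f (t + b) * (f (t + c) * f (t + d))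
      - f (t - a) * f (t - b) * (f (t - c) * f (t - d))
      = -(f (2 * t) * (f (a + b) * f (b + c) * f (c + a))) := by
  have hW : f (t + a) * f (t + b) * (f (t + c) * f (t + d))
      + f (2 * t) * f (a + b) * (f (c + a) * f (b + c))
      + f (t - d) * f (t - c) * (f (t - b) * f (-(t - a))) = 0 := by
    obtain rfl : d = -(a + b + c) := (neg_eq_of_add_eq_zero_right h).symm
    convert hf.three_term ((a + b) / 2 + t) ((a - b) / 2) (t - (a + b) / 2) (c + (a + b) / 2)
      using 5 <;> ring_nf
  rw [hf.odd] at hW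
  linear_combination hW

theorem deriv_mul_four (hf : IsSigmaLike f) (h : a + b + c + d = 0) :
    (deriv f a * f b + f a * deriv f b) * (f c * f d)
      + f a * f b * (deriv f c * f d + f c * deriv f d)
      = -(deriv f 0 * (f (a + b) * f (b + c) * f (c + a))) := by
  have hasDeriv (s : ℂ) : HasDerivAt f (deriv f s) s :=
    hf.differentiable.differentiableAt.hasDerivAt
  have hadd (s : ℂ) : HasDerivAt (fun t => f (t + s)) (deriv f s) 0 :=
    HasDerivAt.comp_add_const 0 s (by simpa using hasDeriv s)
  have hsub (s : ℂ) : HasDerivAt (fun t => f (t - s)) (deriv f s) 0 :=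
    HasDerivAt.comp_sub_const 0 s (by simpa [even_deriv_of_odd hf.odd s] using hasDeriv (-s))
  have hleft := (((hadd a).mul (hadd b)).mul ((hadd c).mul (hadd d))).sub
    (((hsub a).mul (hsub b)).mul ((hsub c).mul (hsub d)))
  have hright : HasDerivAt (fun t => -(f (2 * t) * (f (a + b) * f (b + c) * f (c + a))))
      (-(2 * deriv f 0 * (f (a + b) * f (b + c) * f (c + a)))) 0 := by
    have h2 : HasDerivAt (fun t => f (2 * t)) (2 * deriv f 0) 0 := by
      have h0 : HasDerivAt f (deriv f 0) (2 * 0) := by simpa using hasDeriv 0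
      simpa [mul_comm, Function.comp_def] using h0.comp 0 ((hasDerivAt_id (0 : ℂ)).const_mul 2)
    exact (h2.mul_const _).neg
  have key := hleft.unique (hright.congr_of_eventuallyEq
    (.of_forall fun t => hf.mul_four_sub_mul_four h t))
  simp only [Pi.mul_apply, zero_add, zero_sub, hf.odd _] at key
  linear_combination key / 2

theorem logDeriv_add_four (hf : IsSigmaLike f) (h : a + b + c + d = 0) (ha : f a ≠ 0)
    (hb : f b ≠ 0) (hc : f c ≠ 0) (hd : f d ≠ 0) :
    logDeriv f a + logDeriv f b + logDeriv f c + logDeriv f d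
      = -(deriv f 0 * (f (a + b) * f (b + c) * f (c + a))) / (f a * f b * f c * f d) := by
  rw [← hf.deriv_mul_four h]
  simp only [logDeriv_apply]
  field_simp
  ring

theorem sigmaP_sub_sigmaP (hf : IsSigmaLike f) (hu : f u ≠ 0) (hv : f v ≠ 0) :
    sigmaP f u - sigmaP f v = deriv f 0 ^ 2 * (f (v + u) * f (v - u)) / (f u * f v) ^ 2 := by
  have hd := hf.differentiable
  have hc := hd.continuous
  have hu' : f (0 - u) ≠ 0 := by simpa [hf.odd u] using hu
  have hv' : f (-v - 0) ≠ 0 := by simpa [hf.odd v] using hv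
  let G (t : ℂ) : ℂ := -deriv f 0 * f (t - u + v) * f (v + u) / (f u * f (t - u) * f v * f (-v - t))
  have hζ : (fun t => logDeriv f u + logDeriv f (t - u) + logDeriv f v + logDeriv f (-v - t))
      =ᶠ[nhds 0] fun t => f t * G t := by
    have hu'' : ∀ᶠ t in nhds 0, f (t - u) ≠ 0 := ContinuousAt.eventually_ne (by fun_prop) hu'
    have hv'' : ∀ᶠ t in nhds 0, f (-v - t) ≠ 0 := ContinuousAt.eventually_ne (by fun_prop) hv'
    filter_upwards [hu'', hv''] with t hut hvt
    rw [hf.logDeriv_add_four (by ring) hu hut hv hvt, add_sub_cancel]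
    ring
  have hG : DifferentiableAt ℂ G 0 :=
    DifferentiableAt.div (by fun_prop) (by fun_prop)
      (mul_ne_zero (mul_ne_zero (mul_ne_zero hu hu') hv) hv')
  have hleft := (((hasDerivAt_logDeriv hd hu').comp_sub_const.const_add (logDeriv f u)).add_const
    (logDeriv f v)).add (hasDerivAt_logDeriv hd hv').comp_const_sub
  have hright := (hd.differentiableAt.hasDerivAt.mul hG.hasDerivAt).congr_of_eventuallyEq hζ
  have key : -sigmaP f u + sigmaP f v = deriv f 0 * G 0 := by
    simpa [hf.odd.map_zero, even_sigmaP hf.odd _] using hleft.unique hright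
  have hG0 : G 0 = -deriv f 0 * (f (v + u) * f (v - u)) / (f u * f v) ^ 2 := by
    simp only [G, zero_sub, sub_zero, hf.odd _, neg_add_eq_sub]
    ring
  linear_combination -key - deriv f 0 * hG0

theorem sigmaP_eq_sq_add (hf : IsSigmaLike f) (hω : Function.Antiperiodic f (2 * ω))
    (hfω : f ω ≠ 0) (hu : f u ≠ 0) : sigmaP f u = sigmaPhi f ω u ^ 2 + sigmaP f ω := by
  have hflip : f (ω - u) = f (u + ω) := by
    rw [sub_eq_neg_add]
    exact even_comp_add_half hf.odd hω u
  rw [← sub_eq_iff_eq_add, hf.sigmaP_sub_sigmaP hu hfω, hflip, add_comm ω, sigmaPhi]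
  field_simp

theorem deriv_sigmaPhi (hf : IsSigmaLike f) (hω : Function.Antiperiodic f (2 * ω)) (hfω : f ω ≠ 0)
    (h : u + v + w = 0) (hu : f u ≠ 0) (hv : f v ≠ 0) (hw : f w ≠ 0) :
    deriv (sigmaPhi f ω) u = -sigmaPhi f ω u * (logDeriv f u + logDeriv f v + logDeriv f w)
      - sigmaPhi f ω v * sigmaPhi f ω w := by
  have hquot : deriv (sigmaPhi f ω) u
      = deriv f 0 / f ω * ((deriv f (u + ω) * f u - f (u + ω) * deriv f u) / f u ^ 2) := by
    have hshift : HasDerivAt (fun t => f (t + ω)) (deriv f (u + ω)) u :=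
      hf.differentiable.differentiableAt.hasDerivAt.comp_add_const
    exact ((hshift.div hf.differentiable.differentiableAt.hasDerivAt hu).const_mul _).deriv
  have hderiv : deriv f (u - ω) = -deriv f (u + ω) := by
    have := congrArg (deriv · u) (funext (sub_half_of_antiperiodic hω))
    simpa [deriv_comp_sub_const, deriv_comp_add_const] using this
  have key := hf.deriv_mul_four (a := v) (b := w) (c := ω) (d := u - ω) (by linear_combination h)
  have hvw : f (v + w) = -f u := by
    rw [← hf.odd]
    congr 1
    linear_combination h
  rw [hderiv, sub_half_of_antiperiodic hω, deriv_half_eq_zero hf.odd hω, hvw, add_comm ω] at key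
  rw [hquot]
  simp only [sigmaPhi, logDeriv_apply]
  field_simp
  linear_combination -deriv f 0 * f u * key

theorem hasDerivAt_deriv_sigmaPhi (hf : IsSigmaLike f) (hω : Function.Antiperiodic f (2 * ω))
    (hfω : f ω ≠ 0) (h : u + v + w = 0) (hu : f u ≠ 0) (hv : f v ≠ 0) (hw : f w ≠ 0) :
    HasDerivAt (deriv (sigmaPhi f ω))
      (sigmaPhi f ω u * ((logDeriv f u + logDeriv f v + logDeriv f w) ^ 2
        + sigmaPhi f ω u ^ 2 - sigmaPhi f ω v ^ 2 - sigmaPhi f ω w ^ 2)) u := by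
  have hd := hf.differentiable
  have hc := hd.continuous
  obtain rfl : w = -v - u := by linear_combination h
  have hφ : deriv (sigmaPhi f ω) =ᶠ[nhds u] fun t =>
      -sigmaPhi f ω t * (logDeriv f t + logDeriv f v + logDeriv f (-v - t))
        - sigmaPhi f ω v * sigmaPhi f ω (-v - t) := by
    have hu' : ∀ᶠ t in nhds u, f t ≠ 0 := hc.continuousAt.eventually_ne hu
    have hw' : ∀ᶠ t in nhds u, f (-v - t) ≠ 0 := ContinuousAt.eventually_ne (by fun_prop) hw
    filter_upwards [hu', hw'] with t ht hwt
    exact hf.deriv_sigmaPhi hω hfω (by ring) ht hv hwt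
  have hφu := (differentiableAt_sigmaPhi (ω := ω) hd hu).hasDerivAt
  have hφw := (differentiableAt_sigmaPhi (ω := ω) hd hw).hasDerivAt.comp_const_sub
  have hζ := ((hasDerivAt_logDeriv hd hu).add_const (logDeriv f v)).add
    (hasDerivAt_logDeriv hd hw).comp_const_sub
  refine (((hφu.neg.mul hζ).sub (hφw.const_mul _)).congr_of_eventuallyEq hφ).congr_deriv ?_
  rw [hf.deriv_sigmaPhi hω hfω h hu hv hw,
    hf.deriv_sigmaPhi hω hfω (by ring : -v - u + u + v = 0) hw hu hv,
    hf.sigmaP_eq_sq_add hω hfω hu, hf.sigmaP_eq_sq_add hω hfω hw]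
  simp only [Pi.neg_apply, Pi.add_apply]
  ring

theorem logDeriv_half_add_add (hf : IsSigmaLike f) (hω : Function.Antiperiodic f (2 * ω))
    (hfω : f ω ≠ 0) (hk : deriv f 0 ≠ 0) (h : u + v + w = 0) (hu : f u ≠ 0) (hv : f v ≠ 0)
    (hw : f w ≠ 0) (huω : f (u + ω) ≠ 0) :
    logDeriv f (u + ω) + logDeriv f v + logDeriv f w
      = -(sigmaPhi f ω v * sigmaPhi f ω w) / sigmaPhi f ω u := by
  have hφ := sigmaPhi_ne_zero hfω hk hu huω
  have key := logDeriv_sigmaPhi hf.differentiable hfω hk hu huω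
  rw [logDeriv_apply, hf.deriv_sigmaPhi hω hfω h hu hv hw, div_eq_iff hφ] at key
  rw [eq_div_iff hφ]
  linear_combination -key

theorem sigmaP_add_half (hf : IsSigmaLike f) (hω : Function.Antiperiodic f (2 * ω))
    (hfω : f ω ≠ 0) (hk : deriv f 0 ≠ 0) (h : u + v + w = 0) (hu : f u ≠ 0) (hv : f v ≠ 0)
    (hw : f w ≠ 0) (huω : f (u + ω) ≠ 0) :
    sigmaP f (u + ω) = logDeriv (sigmaPhi f ω) u ^ 2
      - (logDeriv f u + logDeriv f v + logDeriv f w) ^ 2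
      + sigmaPhi f ω v ^ 2 + sigmaPhi f ω w ^ 2 + sigmaP f ω := by
  have hd := hf.differentiable
  have hc := hd.continuous
  have hφ := sigmaPhi_ne_zero hfω hk hu huω
  have hlog : logDeriv (sigmaPhi f ω) =ᶠ[nhds u] fun t => logDeriv f (t + ω) - logDeriv f t := by
    have hu' : ∀ᶠ t in nhds u, f t ≠ 0 := hc.continuousAt.eventually_ne hu
    have hω' : ∀ᶠ t in nhds u, f (t + ω) ≠ 0 := ContinuousAt.eventually_ne (by fun_prop) huω
    filter_upwards [hu', hω'] with t ht htω
    exact logDeriv_sigmaPhi hd hfω hk ht htω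
  have hright : HasDerivAt (logDeriv (sigmaPhi f ω)) (-sigmaP f (u + ω) - -sigmaP f u) u :=
    ((hasDerivAt_logDeriv hd huω).comp_add_const.sub
      (hasDerivAt_logDeriv hd hu)).congr_of_eventuallyEq hlog
  have key := ((hf.hasDerivAt_deriv_sigmaPhi hω hfω h hu hv hw).div
    (differentiableAt_sigmaPhi hd hu).hasDerivAt hφ).unique hright
  rw [hf.sigmaP_eq_sq_add hω hfω hu] at key
  rw [logDeriv_apply]
  field_simp at key ⊢
  linear_combination key

theorem logDeriv_sigmaPhi_mul_sub_sigmaP (hf : IsSigmaLike f)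
    (hω : Function.Antiperiodic f (2 * ω)) (hfω : f ω ≠ 0) (hk : deriv f 0 ≠ 0) (h : u + v + w = 0)
    (hu : f u ≠ 0) (hv : f v ≠ 0) (hw : f w ≠ 0) (huω : f (u + ω) ≠ 0) :
    logDeriv (sigmaPhi f ω) u * (logDeriv f (u + ω) + logDeriv f v + logDeriv f w)
        - sigmaP f (u + ω) - sigmaPhi f ω w / sigmaPhi f ω u * deriv (sigmaPhi f ω) v
      = -sigmaPhi f ω v ^ 2 - sigmaP f ω := by
  have hφ := sigmaPhi_ne_zero hfω hk hu huω
  rw [hf.sigmaP_add_half hω hfω hk h hu hv hw huω,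
    hf.logDeriv_half_add_add hω hfω hk h hu hv hw huω, logDeriv_apply,
    hf.deriv_sigmaPhi hω hfω h hu hv hw,
    hf.deriv_sigmaPhi hω hfω (by linear_combination h : v + w + u = 0) hv hw hu]
  field_simp
  ring

theorem deriv_sigmaP_add_half (hf : IsSigmaLike f) (hω : Function.Antiperiodic f (2 * ω))
    (hfω : f ω ≠ 0) (hu : f u ≠ 0) (huω : f (u + ω) ≠ 0) :
    2 * deriv (sigmaPhi f ω) u * (sigmaP f (u + ω) - sigmaP f ω)
      + sigmaPhi f ω u * deriv (sigmaP f) (u + ω) = 0 := by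
  have hd := hf.differentiable
  have hc := hd.continuous
  have hu' : ∀ᶠ t in nhds u, f t ≠ 0 := hc.continuousAt.eventually_ne hu
  have hω' : ∀ᶠ t in nhds u, f (t + ω) ≠ 0 := ContinuousAt.eventually_ne (by fun_prop) huω
  have hφ := (differentiableAt_sigmaPhi (ω := ω) hd hu).hasDerivAt
  have hφω := (differentiableAt_sigmaPhi (ω := ω) hd huω).hasDerivAt
  have hsq : sigmaP f =ᶠ[nhds (u + ω)] fun t => sigmaPhi f ω t ^ 2 + sigmaP f ω := by
    filter_upwards [hc.continuousAt.eventually_ne huω] with t ht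
    exact hf.sigmaP_eq_sq_add hω hfω ht
  have hmul : (fun t => sigmaPhi f ω t * sigmaPhi f ω (t + ω))
      =ᶠ[nhds u] fun _ => -(deriv f 0 / f ω) ^ 2 := by
    filter_upwards [hu', hω'] with t ht htω
    exact sigmaPhi_mul_sigmaPhi_add_half hω ht htω
  have hprod := ((hφ.mul hφω.comp_add_const).congr_of_eventuallyEq hmul.symm).unique
    (hasDerivAt_const u _)
  rw [hsq.deriv_eq, ((hφω.fun_pow 2).add_const _).deriv, hsq.eq_of_nhds]
  linear_combination 2 * sigmaPhi f ω (u + ω) * hprod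

theorem deriv_deriv_sigmaPhi_mul (hf : IsSigmaLike f) (hω : Function.Antiperiodic f (2 * ω))
    (hfω : f ω ≠ 0) (h : u + v + w = 0) (hu : f u ≠ 0) (hv : f v ≠ 0) (hw : f w ≠ 0) :
    deriv (deriv (sigmaPhi f ω)) u * (sigmaPhi f ω v * sigmaPhi f ω w) = sigmaPhi f ω u *
      (deriv (sigmaPhi f ω) u * (sigmaPhi f ω v ^ 2 + sigmaPhi f ω w ^ 2)
        + deriv (sigmaPhi f ω) v * deriv (sigmaPhi f ω) w) := by
  rw [(hf.hasDerivAt_deriv_sigmaPhi hω hfω h hu hv hw).deriv,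
    hf.deriv_sigmaPhi hω hfω h hu hv hw,
    hf.deriv_sigmaPhi hω hfω (by linear_combination h : v + w + u = 0) hv hw hu,
    hf.deriv_sigmaPhi hω hfω (by linear_combination h : w + u + v = 0) hw hu hv]
  ring

theorem gibbonsTsarev_identity {x y z : ℂ} (hf : IsSigmaLike f)
    (hω : Function.Antiperiodic f (2 * ω)) (hfω : f ω ≠ 0) (hk : deriv f 0 ≠ 0)
    (hx : f x ≠ 0) (hy : f y ≠ 0) (hz : f z ≠ 0)
    (hxy : f (x - y) ≠ 0) (hzx : f (z - x) ≠ 0) (hzy : f (z - y) ≠ 0)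
    (hxω : f (x + ω) ≠ 0) (hyω : f (y + ω) ≠ 0) (hxyω : f (x - y + ω) ≠ 0) :
    deriv (deriv (sigmaPhi f ω)) (x - y)
        * (logDeriv f (z - x) - logDeriv f (z - y) + logDeriv f (x - y + ω))
      - 2 * deriv (sigmaPhi f ω) (x - y) * sigmaP f (x - y + ω)
      - sigmaPhi f ω (x - y) * deriv (sigmaP f) (x - y + ω)
      + 2 * deriv (sigmaPhi f ω) (x - y) * sigmaP f (y - z)
      + deriv (sigmaPhi f ω) (x - y) * logDeriv (sigmaPhi f ω) y
          * (-logDeriv f z + logDeriv f (z - y) + logDeriv f (y + ω))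
      - deriv (sigmaPhi f ω) (x - y) * logDeriv (sigmaPhi f ω) x
          * (-logDeriv f z + logDeriv f (z - x) + logDeriv f (x + ω))
      + deriv (sigmaPhi f ω) (x - y) * (sigmaP f (x + ω) - sigmaP f (y + ω))
      - sigmaPhi f ω z / sigmaPhi f ω x * deriv (sigmaPhi f ω) (z - x)
          * deriv (sigmaPhi f ω) (x - y)
      + sigmaPhi f ω z / sigmaPhi f ω y * deriv (sigmaPhi f ω) (z - y)
          * deriv (sigmaPhi f ω) (x - y)
      + deriv (sigmaPhi f ω) (z - x) * deriv (sigmaPhi f ω) (z - y) = 0 := by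
  have hφ := odd_sigmaPhi hf.odd hω
  have hφxy := sigmaPhi_ne_zero hfω hk hxy hxyω
  have hnz : f (-z) ≠ 0 := by rwa [hf.odd, neg_ne_zero]
  have hyz : f (y - z) ≠ 0 := by rwa [← neg_sub, hf.odd, neg_ne_zero]
  have hsum : x - y + (z - x) + (y - z) = 0 := by ring
  have hζ := hf.logDeriv_half_add_add hω hfω hk hsum hxy hzx hyz hxyω
  have hφ₃ := hf.deriv_deriv_sigmaPhi_mul hω hfω hsum hxy hzx hyz
  have hφ' := hf.deriv_sigmaP_add_half hω hfω hxy hxyω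
  have hKx := hf.logDeriv_sigmaPhi_mul_sub_sigmaP hω hfω hk
    (by ring : x + (z - x) + -z = 0) hx hzx hnz hxω
  have hKy := hf.logDeriv_sigmaPhi_mul_sub_sigmaP hω hfω hk
    (by ring : y + (z - y) + -z = 0) hy hzy hnz hyω
  have hflip : y - z = -(z - y) := by ring
  rw [hflip, hφ, even_deriv_of_odd hφ] at hφ₃
  rw [hflip, hφ, odd_logDeriv_of_odd hf.odd] at hζ
  rw [hφ, odd_logDeriv_of_odd hf.odd] at hKx hKy
  rw [hflip, even_sigmaP hf.odd, hf.sigmaP_eq_sq_add hω hfω hzy]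
  rw [eq_div_iff hφxy] at hζ
  refine mul_left_cancel₀ hφxy ?_
  linear_combination deriv (deriv (sigmaPhi f ω)) (x - y) * hζ - hφ₃
    - sigmaPhi f ω (x - y) * hφ'
    + sigmaPhi f ω (x - y) * deriv (sigmaPhi f ω) (x - y) * (hKy - hKx)

end IsSigmaLike

theorem theta3_eq_jacobiTheta₂ (u τ : ℂ) : theta3 u τ = jacobiTheta₂ u τ :=
  tsum_congr fun k => by
    rw [jacobiTheta₂_term]
    ring_nf

theorem theta2_eq_exp_mul_jacobiTheta₂ (u τ : ℂ) :
    theta2 u τ = exp (Real.pi * I * τ / 4 + Real.pi * I * u) * jacobiTheta₂ (u + τ / 2) τ := by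
  rw [theta2, jacobiTheta₂, ← tsum_mul_left]
  refine tsum_congr fun k => ?_
  rw [jacobiTheta₂_term, ← exp_add]
  ring_nf

theorem theta1_eq_neg_theta2 (u τ : ℂ) : theta1 u τ = -theta2 (u + 1 / 2) τ := rfl

theorem theta4_eq_theta3 (u τ : ℂ) : theta4 u τ = theta3 (u + 1 / 2) τ := rfl

theorem theta3_add_one (u τ : ℂ) : theta3 (u + 1) τ = theta3 u τ := by
  simp only [theta3_eq_jacobiTheta₂, jacobiTheta₂_add_left]

theorem theta2_add_one (u τ : ℂ) : theta2 (u + 1) τ = -theta2 u τ := by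
  rw [theta2_eq_exp_mul_jacobiTheta₂, theta2_eq_exp_mul_jacobiTheta₂, add_right_comm u,
    jacobiTheta₂_add_left, mul_add_one, ← add_assoc, exp_add_pi_mul_I, neg_mul]

theorem theta2_neg (u τ : ℂ) : theta2 (-u) τ = theta2 u τ := by
  have hflip : -u + τ / 2 = -(u - τ / 2) := by ring
  have hshift : u + τ / 2 = u - τ / 2 + τ := by ring
  rw [theta2_eq_exp_mul_jacobiTheta₂, theta2_eq_exp_mul_jacobiTheta₂, hflip,
    jacobiTheta₂_neg_left, hshift, jacobiTheta₂_add_left', ← mul_assoc, ← exp_add]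
  ring_nf

theorem theta1_add_half (u τ : ℂ) : theta1 (u + 1 / 2) τ = theta2 u τ := by
  rw [theta1_eq_neg_theta2, add_assoc, add_halves, theta2_add_one, neg_neg]

theorem antiperiodic_theta1 (τ : ℂ) : Function.Antiperiodic (theta1 · τ) (2 * (1 / 2)) :=
  fun u => by
    simp only [mul_one_div_cancel (two_ne_zero' ℂ), theta1_eq_neg_theta2, add_right_comm u 1,
      theta2_add_one]

theorem odd_theta1 (τ : ℂ) : Function.Odd (theta1 · τ) := fun u => by
  have hshift : u - 1 / 2 + 1 = u + 1 / 2 := by ring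
  have hflip : -u + 1 / 2 = -(u - 1 / 2) := by ring
  change theta1 (-u) τ = -theta1 u τ
  rw [theta1_eq_neg_theta2, theta1_eq_neg_theta2, hflip, theta2_neg, ← hshift, theta2_add_one,
    neg_neg]

theorem even_theta4 (τ : ℂ) : Function.Even (theta4 · τ) := fun u => by
  have hshift : u - 1 / 2 + 1 = u + 1 / 2 := by ring
  have hflip : -u + 1 / 2 = -(u - 1 / 2) := by ring
  change theta4 (-u) τ = theta4 u τ
  rw [theta4_eq_theta3, theta4_eq_theta3, hflip, ← hshift, theta3_add_one,
    theta3_eq_jacobiTheta₂, theta3_eq_jacobiTheta₂, jacobiTheta₂_neg_left]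

section Analytic

variable {τ : ℂ}

theorem differentiable_theta2 (hτ : 0 < τ.im) : Differentiable ℂ (theta2 · τ) := by
  simp only [theta2_eq_exp_mul_jacobiTheta₂]
  exact fun u => DifferentiableAt.mul (by fun_prop)
    (differentiableAt_comp_add_const.2 (differentiableAt_jacobiTheta₂_fst _ hτ))

theorem differentiable_theta1 (hτ : 0 < τ.im) : Differentiable ℂ (theta1 · τ) := fun _ =>
  (differentiableAt_comp_add_const.2 (differentiable_theta2 hτ _)).neg

theorem differentiable_theta4 (hτ : 0 < τ.im) : Differentiable ℂ (theta4 · τ) := by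
  simp only [theta4_eq_theta3, theta3_eq_jacobiTheta₂]
  exact fun u => differentiableAt_comp_add_const.2 (differentiableAt_jacobiTheta₂_fst _ hτ)

theorem summable_theta3 (u : ℂ) (hτ : 0 < τ.im) :
    Summable fun k : ℤ => exp (Real.pi * I * τ * (k : ℂ) ^ 2 + 2 * Real.pi * I * u * k) := by
  refine ((summable_jacobiTheta₂_term_iff u τ).2 hτ).congr fun k => ?_
  rw [jacobiTheta₂_term]
  ring_nf

theorem summable_theta2 (u : ℂ) (hτ : 0 < τ.im) :
    Summable fun k : ℤ =>
      exp (Real.pi * I * τ * ((k : ℂ) + 1 / 2) ^ 2 + 2 * Real.pi * I * u * (k + 1 / 2)) := by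
  refine (((summable_jacobiTheta₂_term_iff (u + τ / 2) τ).2 hτ).mul_left
    (exp (Real.pi * I * τ / 4 + Real.pi * I * u))).congr fun k => ?_
  rw [jacobiTheta₂_term, ← exp_add]
  ring_nf

end Analytic

/-- Two copies of the lattice `ℤ²` cover `ℤ²`: the pairs `(k, l)` with `k - l` odd are the
`(m + n, m - n - 1)`, those with `k - l` even are the `(m + n, m - n)`. This is the change of
summation variables in the duplication formula for theta functions. -/
noncomputable def latticeParityEquiv : (ℤ × ℤ) ⊕ (ℤ × ℤ) ≃ ℤ × ℤ :=
  Equiv.ofBijective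
    (Sum.elim (fun p => (p.1 + p.2, p.1 - p.2 - 1)) fun p => (p.1 + p.2, p.1 - p.2)) <| by
    constructor
    · rintro (⟨a, b⟩ | ⟨a, b⟩) (⟨c, d⟩ | ⟨c, d⟩) h <;>
        simp only [Sum.elim_inl, Sum.elim_inr, Prod.mk.injEq, Sum.inl.injEq, Sum.inr.injEq,
          reduceCtorEq] at h ⊢ <;> omega
    · rintro ⟨k, l⟩
      rcases Int.even_or_odd' (k - l) with ⟨i, hi | hi⟩
      · exact ⟨Sum.inr (k - i, i), Prod.ext (by simp) (by simp only [Sum.elim_inr]; omega)⟩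
      · exact ⟨Sum.inl (k - i, i), Prod.ext (by simp) (by simp only [Sum.elim_inl]; omega)⟩

theorem latticeParityEquiv_inl (p : ℤ × ℤ) :
    latticeParityEquiv (.inl p) = (p.1 + p.2, p.1 - p.2 - 1) := rfl

theorem latticeParityEquiv_inr (p : ℤ × ℤ) :
    latticeParityEquiv (.inr p) = (p.1 + p.2, p.1 - p.2) := rfl

section HalfPeriod

variable {τ u : ℂ}

theorem theta2_mul_theta2 (hτ : 0 < τ.im) (X Y : ℂ) :
    theta2 X (τ / 2) * theta2 Y (τ / 2)
      = theta3 (X + Y) τ * theta2 (X - Y) τ + theta2 (X + Y) τ * theta3 (X - Y) τ := by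
  have hσ : 0 < (τ / 2).im := by
    rw [div_ofNat_im]
    positivity
  have hX := (summable_theta2 X hσ).norm
  have hY := (summable_theta2 Y hσ).norm
  have hXY := latticeParityEquiv.summable_iff.2 (summable_mul_of_summable_norm hX hY)
  have hsplit := Summable.tsum_sum (hXY.comp_injective Sum.inl_injective)
    (hXY.comp_injective Sum.inr_injective)
  rw [theta2, theta2, tsum_mul_tsum_of_summable_norm hX hY, ← latticeParityEquiv.tsum_eq]
  refine hsplit.trans ?_
  rw [theta3, theta2, theta2, theta3,
    tsum_mul_tsum_of_summable_norm (summable_theta3 _ hτ).norm (summable_theta2 _ hτ).norm,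
    tsum_mul_tsum_of_summable_norm (summable_theta2 _ hτ).norm (summable_theta3 _ hτ).norm]
  congr 1 <;> refine tsum_congr fun p => ?_ <;>
  · simp only [Function.comp_apply, latticeParityEquiv_inl, latticeParityEquiv_inr, ← exp_add]
    push_cast
    ring_nf

theorem theta1_mul_theta2 (hτ : 0 < τ.im) (X Y : ℂ) :
    theta1 X (τ / 2) * theta2 Y (τ / 2)
      = theta4 (X + Y) τ * theta1 (X - Y) τ + theta1 (X + Y) τ * theta4 (X - Y) τ := by
  have h := theta2_mul_theta2 hτ (X + 1 / 2) Y
  rw [add_right_comm X, add_sub_right_comm X] at h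
  simp only [theta1_eq_neg_theta2, theta4_eq_theta3]
  linear_combination -h

theorem theta1_mul_theta1 (hτ : 0 < τ.im) (X Y : ℂ) :
    theta1 X (τ / 2) * theta1 Y (τ / 2)
      = theta3 (X + Y) τ * theta2 (X - Y) τ - theta2 (X + Y) τ * theta3 (X - Y) τ := by
  have h := theta2_mul_theta2 hτ (X + 1 / 2) (Y + 1 / 2)
  rw [add_add_add_comm X, add_halves, add_sub_add_right_eq_sub, theta2_add_one,
    theta3_add_one] at h
  simp only [theta1_eq_neg_theta2]
  linear_combination h

theorem isSigmaLike_theta1 (hτ : 0 < τ.im) : IsSigmaLike (theta1 · (τ / 2)) where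
  differentiable := differentiable_theta1 (by rw [div_ofNat_im]; positivity)
  odd := odd_theta1 _
  three_term x y z w := by
    have hprod (a b : ℂ) : theta1 (a + b) (τ / 2) * theta1 (a - b) (τ / 2)
        = theta3 (2 * a) τ * theta2 (2 * b) τ - theta2 (2 * a) τ * theta3 (2 * b) τ := by
      rw [theta1_mul_theta1 hτ, add_add_sub_cancel, add_sub_sub_cancel, two_mul, two_mul]
    simp only [hprod]
    ring

theorem theta1_mul_theta1_half (hτ : 0 < τ.im) (u : ℂ) :
    theta1 u (τ / 2) * theta1 (1 / 2) (τ / 2) = 2 * (theta1 u τ * theta4 u τ) := by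
  have h := theta1_mul_theta2 hτ u 0
  rw [← theta1_add_half, zero_add, add_zero, sub_zero] at h
  linear_combination h

theorem theta1_div_two_ne_zero (hτ : 0 < τ.im) (h₁ : theta1 u τ ≠ 0) (h₄ : theta4 u τ ≠ 0) :
    theta1 u (τ / 2) ≠ 0 :=
  left_ne_zero_of_mul (theta1_mul_theta1_half hτ u ▸ mul_ne_zero two_ne_zero (mul_ne_zero h₁ h₄))

theorem theta1_half_ne_zero (hτ : 0 < τ.im) (h₁ : theta1 u τ ≠ 0) (h₄ : theta4 u τ ≠ 0) :
    theta1 (1 / 2) (τ / 2) ≠ 0 :=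
  right_ne_zero_of_mul (theta1_mul_theta1_half hτ u ▸ mul_ne_zero two_ne_zero (mul_ne_zero h₁ h₄))

theorem deriv_theta1_zero_mul_theta2 (hτ : 0 < τ.im) (u : ℂ) :
    deriv (theta1 · (τ / 2)) 0 * theta2 u (τ / 2)
      = 2 * (deriv (theta1 · τ) u * theta4 u τ - theta1 u τ * deriv (theta4 · τ) u) := by
  have hodd (s : ℂ) : theta1 (-s) τ = -theta1 s τ := odd_theta1 τ s
  have heven (s : ℂ) : theta4 (-s) τ = theta4 s τ := even_theta4 τ s
  have h₁ (s : ℂ) := (differentiable_theta1 hτ s).hasDerivAt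
  have h₄ (s : ℂ) := (differentiable_theta4 hτ s).hasDerivAt
  have hleft := ((isSigmaLike_theta1 hτ).differentiable 0).hasDerivAt.mul_const (theta2 u (τ / 2))
  have hright := ((h₄ (0 + u)).comp_add_const.mul (h₁ (0 - u)).comp_sub_const).add
    ((h₁ (0 + u)).comp_add_const.mul (h₄ (0 - u)).comp_sub_const)
  have key := hleft.unique (hright.congr_of_eventuallyEq
    (.of_forall fun X => theta1_mul_theta2 hτ X u))
  simp only [zero_add, zero_sub, even_deriv_of_odd (odd_theta1 τ) u,
    odd_deriv_of_even (even_theta4 τ) u, hodd, heven] at key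
  linear_combination key

theorem Sp_eq_sigmaPhi (hτ : 0 < τ.im) (hω : theta1 (1 / 2) (τ / 2) ≠ 0)
    (hu : theta1 u (τ / 2) ≠ 0) : Sp u τ = sigmaPhi (theta1 · (τ / 2)) (1 / 2) u := by
  have hmul := theta1_mul_theta1_half hτ u
  have hne : theta1 u τ * theta4 u τ ≠ 0 :=
    right_ne_zero_of_mul (hmul ▸ mul_ne_zero hu hω)
  have hderiv := deriv_theta1_zero_mul_theta2 hτ u
  rw [Sp, zeta1, zeta4, sigmaPhi, theta1_add_half,
    div_sub_div _ _ (left_ne_zero_of_mul hne) (right_ne_zero_of_mul hne), div_mul_div_comm,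
    div_eq_div_iff hne (mul_ne_zero hω hu), hderiv]
  linear_combination (deriv (theta1 · τ) u * theta4 u τ
    - theta1 u τ * deriv (theta4 · τ) u) * hmul

theorem Sp_eventuallyEq_sigmaPhi (hτ : 0 < τ.im) (hω : theta1 (1 / 2) (τ / 2) ≠ 0)
    (hu : theta1 u (τ / 2) ≠ 0) :
    (Sp · τ) =ᶠ[nhds u] sigmaPhi (theta1 · (τ / 2)) (1 / 2) := by
  filter_upwards [(isSigmaLike_theta1 hτ).differentiable.continuous.continuousAt.eventually_ne hu]
    with v hv
  exact Sp_eq_sigmaPhi hτ hω hv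

theorem Spp_eq_deriv (hτ : 0 < τ.im) (hω : theta1 (1 / 2) (τ / 2) ≠ 0)
    (hu : theta1 u (τ / 2) ≠ 0) : Spp u τ = deriv (sigmaPhi (theta1 · (τ / 2)) (1 / 2)) u :=
  (Sp_eventuallyEq_sigmaPhi hτ hω hu).deriv_eq

theorem Sppp_eq_deriv_deriv (hτ : 0 < τ.im) (hω : theta1 (1 / 2) (τ / 2) ≠ 0)
    (hu : theta1 u (τ / 2) ≠ 0) :
    Sppp u τ = deriv (deriv (sigmaPhi (theta1 · (τ / 2)) (1 / 2))) u :=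
  (Sp_eventuallyEq_sigmaPhi hτ hω hu).deriv.deriv_eq

end HalfPeriod

theorem zeta2_eq_logDeriv (u τ : ℂ) : zeta2 u τ = logDeriv (theta1 · τ) (u + 1 / 2) := by
  rw [zeta2, logDeriv_apply, theta1_add_half, ← deriv_comp_add_const]
  simp only [theta1_add_half]

theorem wp2_eq_sigmaP (u τ : ℂ) : wp2 u τ = sigmaP (theta1 · τ) (u + 1 / 2) := by
  simp only [wp2, zeta2_eq_logDeriv, deriv_comp_add_const, sigmaP]

theorem wp2'_eq_deriv_sigmaP (u τ : ℂ) :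
    wp2' u τ = deriv (sigmaP (theta1 · τ)) (u + 1 / 2) := by
  simp only [wp2', wp2_eq_sigmaP, deriv_comp_add_const]

/-- Vanishing of h (Appendix D): the identity proving
∂_{λ_k}Γ_{ij} = Γ_{ij}Γ_{jk} + Γ_{ik}Γ_{kj} − Γ_{ik}Γ_{ij}
under the elliptic Gibbons–Tsarev system. Here σ = τ/2. -/
theorem appendixD_h_vanishes (τ x y z : ℂ) (hτ : 0 < τ.im)
    (h1 : theta1 (x - y) τ ≠ 0) (h2 : theta4 (x - y) τ ≠ 0)
    (h3 : theta1 x τ ≠ 0) (h4 : theta4 x τ ≠ 0)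
    (h5 : theta1 y τ ≠ 0) (h6 : theta4 y τ ≠ 0)
    (h7 : theta1 z τ ≠ 0) (h8 : theta4 z τ ≠ 0)
    (h9 : theta1 (z - x) τ ≠ 0) (h10 : theta4 (z - x) τ ≠ 0)
    (h11 : theta1 (z - y) τ ≠ 0) (h12 : theta4 (z - y) τ ≠ 0)
    (h13 : theta1 (z - x) (τ / 2) ≠ 0) (h14 : theta1 (z - y) (τ / 2) ≠ 0)
    (h15 : theta1 z (τ / 2) ≠ 0) (h16 : theta1 (y - z) (τ / 2) ≠ 0)
    (h17 : theta2 (x - y) (τ / 2) ≠ 0) (h18 : theta2 x (τ / 2) ≠ 0)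
    (h19 : theta2 y (τ / 2) ≠ 0)
    (h20 : Sp x τ ≠ 0) (h21 : Sp y τ ≠ 0) :
    Sppp (x - y) τ
        * (zeta1 (z - x) (τ / 2) - zeta1 (z - y) (τ / 2) + zeta2 (x - y) (τ / 2))
      - 2 * Spp (x - y) τ * wp2 (x - y) (τ / 2)
      - Sp (x - y) τ * wp2' (x - y) (τ / 2)
      + 2 * Spp (x - y) τ * wp1 (y - z) (τ / 2)
      + Spp (x - y) τ * (Spp y τ / Sp y τ)
          * (-zeta1 z (τ / 2) + zeta1 (z - y) (τ / 2) + zeta2 y (τ / 2))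
      - Spp (x - y) τ * (Spp x τ / Sp x τ)
          * (-zeta1 z (τ / 2) + zeta1 (z - x) (τ / 2) + zeta2 x (τ / 2))
      + Spp (x - y) τ * (wp2 x (τ / 2) - wp2 y (τ / 2))
      - (Sp z τ / Sp x τ) * Spp (z - x) τ * Spp (x - y) τ
      + (Sp z τ / Sp y τ) * Spp (z - y) τ * Spp (x - y) τ
      + Spp (z - x) τ * Spp (z - y) τ = 0 := by
  have hfω := theta1_half_ne_zero hτ h1 h2
  have hx := theta1_div_two_ne_zero hτ h3 h4
  have hy := theta1_div_two_ne_zero hτ h5 h6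
  have hxy := theta1_div_two_ne_zero hτ h1 h2
  have hk : deriv (theta1 · (τ / 2)) 0 ≠ 0 := fun h0 =>
    h20 (by rw [Sp_eq_sigmaPhi hτ hfω hx, sigmaPhi, h0, zero_div, zero_mul])
  rw [← theta1_add_half] at h17 h18 h19
  simp only [zeta2_eq_logDeriv, wp2_eq_sigmaP, wp2'_eq_deriv_sigmaP]
  rw [Sppp_eq_deriv_deriv hτ hfω hxy, Spp_eq_deriv hτ hfω hxy, Spp_eq_deriv hτ hfω hx,
    Spp_eq_deriv hτ hfω hy, Spp_eq_deriv hτ hfω h13, Spp_eq_deriv hτ hfω h14,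
    Sp_eq_sigmaPhi hτ hfω hxy, Sp_eq_sigmaPhi hτ hfω hx, Sp_eq_sigmaPhi hτ hfω hy,
    Sp_eq_sigmaPhi hτ hfω h15]
  exact (isSigmaLike_theta1 hτ).gibbonsTsarev_identity (antiperiodic_theta1 _) hfω hk hx hy h15
    hxy h13 h14 h18 h19 h17
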